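/- arXiv:math/9903030 — 2 statements merged into one kernel-verified Lean document; each statement's English description precedes it below -/
import Mathlib

section
/- Let s ≥ 1, l ≥ 2, t ≥ 1, let I be a two-sided ideal of F_s minimally generated by a set of t homogeneous elements of degree l, and let R = F_s/I with a_n = dim_k R_n. Then the series Σ_{n≥0} a_n·s^{−n} converges, and t ≥ s^l / (Σ_{n≥0} a_n·s^{−n}). -/
open scoped ENNReal NNReal
open PowerSeries

noncomputable section

/-- The degree-`n` homogeneous component of the free algebra `k⟨X⟩`
(standard grading: each generator has degree 1). -/
def freeDeg (k : Type) [Field k] (X : Type) (n : ℕ) : Submodule k (FreeAlgebra k X) :=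
  (Submodule.span k (Set.range (FreeAlgebra.ι k)) : Submodule k (FreeAlgebra k X)) ^ n

/-- The two-sided ideal generated by a set `S`, as a `k`-submodule. -/
def idealGen (k : Type) [Field k] {A : Type} [Ring A] [Algebra k A] (S : Set A) :
    Submodule k A :=
  Submodule.span k {x : A | ∃ a b : A, ∃ s ∈ S, x = a * s * b}

/-- The dimension of the `n`-th component of the quotient of a graded algebra
(with components `𝒜`) by a homogeneous ideal `I`, i.e. `dim (𝒜 n / (I ∩ 𝒜 n))`. -/
def quotDim (k : Type) [Field k] {A : Type} [Ring A] [Algebra k A]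
    (𝒜 : ℕ → Submodule k A) (I : Submodule k A) (n : ℕ) : ℕ :=
  Module.finrank k (↥(𝒜 n) ⧸ (I.comap (𝒜 n).subtype))

/-- The radius of convergence of the power series `Σ a_n t^n`, as an element of `[0,∞]`. -/
def hradius (a : ℕ → ℝ) : ℝ≥0∞ :=
  ⨆ (r : ℝ≥0) (_ : Summable fun n => |a n| * (r : ℝ) ^ n), (r : ℝ≥0∞)

end

/-!
Let `Iₙ = I ∩ Fₙ`, `aₙ = dim Rₙ` and `bₙ = aₙ s⁻ⁿ`. Multiplication of complements gives `a_{m+n} ≤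
a_m a_n`, and `a_l < s ^ l` because `I_l` is nonzero, so `b_{n+l} ≤ b_l b_n` with `b_l < 1` and
the series converges geometrically. Let `V` be the span of the generators and `C_m` a complement
of `I_m` in `F_m`. A homogeneous element of `I` of degree `m + l` is a sum of products `u v w`
with `v ∈ V`. The products with `deg w > 0` lie in `I_{m+l-1} F₁`, and those with `deg w = 0` lie
in `F_m V = I_m V + C_m V`, where again `I_m V ⊆ I_{m+l-1} F₁`. Counting dimensions yields `s
a_{m+l-1} ≤ a_{m+l} + t a_m`. Dividing by `s ^ (m + l)` and summing over `m`, the sum telescopes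
to `b_{l-1} ≤ t s⁻ˡ ∑ bₘ`, and `b_{l-1} = 1` since `I` vanishes below degree `l`.
-/

section Series

theorem summable_of_add_le_mul {b : ℕ → ℝ} {c : ℝ} {l : ℕ} (hb : ∀ n, 0 ≤ b n) (hc : c < 1)
    (h : ∀ n, b (n + l) ≤ c * b n) : Summable b := by
  refine summable_of_sum_range_le (c := (∑ i ∈ Finset.range l, b i) / (1 - c)) hb fun N => ?_
  rw [le_div_iff₀ (sub_pos.2 hc)]
  have hshift : ∑ i ∈ Finset.range N, b i ≤
      ∑ i ∈ Finset.range l, b i + c * ∑ i ∈ Finset.range N, b i :=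
    calc ∑ i ∈ Finset.range N, b i
        ≤ ∑ i ∈ Finset.range (l + N), b i :=
          Finset.sum_le_sum_of_subset_of_nonneg (Finset.range_mono (Nat.le_add_left N l))
            fun i _ _ => hb i
      _ = ∑ i ∈ Finset.range l, b i + ∑ i ∈ Finset.range N, b (i + l) := by
          simp only [Finset.sum_range_add, add_comm _ l]
      _ ≤ ∑ i ∈ Finset.range l, b i + c * ∑ i ∈ Finset.range N, b i := by
          rw [Finset.mul_sum]
          gcongr with i
          exact h i
  linarith

theorem summable_mul_pow_of_submultiplicative {a : ℕ → ℝ} {x : ℝ} {l : ℕ} (ha : ∀ n, 0 ≤ a n)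
    (hx : 0 ≤ x) (hmul : ∀ m n, a (m + n) ≤ a m * a n) (hl : a l * x ^ l < 1) :
    Summable fun n => a n * x ^ n := by
  refine summable_of_add_le_mul (l := l) (fun n => mul_nonneg (ha n) (pow_nonneg hx n)) hl
    fun n => ?_
  calc a (n + l) * x ^ (n + l) ≤ a n * a l * x ^ (n + l) := by gcongr; exact hmul n l
    _ = a l * x ^ l * (a n * x ^ n) := by ring

theorem le_mul_tsum_of_le_succ_add {b : ℕ → ℝ} {c : ℝ} {p : ℕ} (hb : Summable b)
    (h : ∀ n, b (n + p) ≤ b (n + p + 1) + c * b n) : b p ≤ c * ∑' n, b n := by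
  have htail : Summable fun n => b (n + p) := (summable_nat_add_iff p).2 hb
  have htail' : Summable fun n => b (n + p + 1) := (summable_nat_add_iff (p + 1)).2 hb
  have hsplit : ∑' n, b (n + p) = b p + ∑' n, b (n + p + 1) := by
    simpa only [zero_add, add_right_comm] using htail.tsum_eq_zero_add
  have hle : ∑' n, b (n + p) ≤ ∑' n, b (n + p + 1) + c * ∑' n, b n := by
    rw [← tsum_mul_left, ← htail'.tsum_add (hb.mul_left c)]
    exact htail.tsum_le_tsum h (htail'.add (hb.mul_left c))
  linarith

theorem pow_succ_div_tsum_le {a : ℕ → ℝ} {s t : ℝ} {p : ℕ} (ha : ∀ n, 0 ≤ a n) (hs : 0 < s)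
    (hsum : Summable fun n => a n * s⁻¹ ^ n) (hp : a p = s ^ p)
    (hstep : ∀ n, s * a (n + p) ≤ a (n + p + 1) + t * a n) :
    s ^ (p + 1) / ∑' n, a n * s⁻¹ ^ n ≤ t := by
  have hb (n : ℕ) : 0 ≤ a n * s⁻¹ ^ n := mul_nonneg (ha n) (by positivity)
  have hbp : a p * s⁻¹ ^ p = 1 := by
    rw [hp, ← mul_pow, mul_inv_cancel₀ hs.ne', one_pow]
  have hbstep (n : ℕ) : a (n + p) * s⁻¹ ^ (n + p) ≤
      a (n + p + 1) * s⁻¹ ^ (n + p + 1) + t * s⁻¹ ^ (p + 1) * (a n * s⁻¹ ^ n) :=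
    calc a (n + p) * s⁻¹ ^ (n + p) = s * a (n + p) * s⁻¹ ^ (n + p + 1) := by
          rw [pow_succ]; field_simp
      _ ≤ (a (n + p + 1) + t * a n) * s⁻¹ ^ (n + p + 1) := by gcongr; exact hstep n
      _ = _ := by ring
  have hbound := le_mul_tsum_of_le_succ_add hsum hbstep
  rw [hbp] at hbound
  rw [div_le_iff₀ (hsum.tsum_pos hb p (hbp ▸ one_pos))]
  calc s ^ (p + 1) ≤ s ^ (p + 1) * (t * s⁻¹ ^ (p + 1) * ∑' n, a n * s⁻¹ ^ n) :=
        le_mul_of_one_le_right (by positivity) hbound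
    _ = (s * s⁻¹) ^ (p + 1) * (t * ∑' n, a n * s⁻¹ ^ n) := by ring
    _ = t * ∑' n, a n * s⁻¹ ^ n := by rw [mul_inv_cancel₀ hs.ne', one_pow, one_mul]

end Series

theorem iSup_inf_component_le {ι κ R M : Type*} [DecidableEq ι] [Semiring R] [AddCommMonoid M]
    [Module R M] (ℳ : ι → Submodule R M) [DirectSum.Decomposition ℳ] {W : κ → Submodule R M}
    {d : κ → ι} (hW : ∀ j, W j ≤ ℳ (d j)) (i : ι) :
    (⨆ j, W j) ⊓ ℳ i ≤ ⨆ (j) (_ : d j = i), W j := by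
  rintro x ⟨hx, hxi⟩
  rw [← DirectSum.decompose_of_mem_same ℳ hxi]
  clear hxi
  induction hx using Submodule.iSup_induction' with
  | mem j y hy =>
    by_cases hj : d j = i
    · subst hj
      rw [DirectSum.decompose_of_mem_same ℳ (hW j hy)]
      exact Submodule.mem_iSup_of_mem j (Submodule.mem_iSup_of_mem rfl hy)
    · rw [DirectSum.decompose_of_mem_ne ℳ (hW j hy) hj]
      exact zero_mem _
  | zero => simp
  | add y z _ _ hy hz =>
    rw [DirectSum.decompose_add]
    exact add_mem hy hz

section Mul

variable {k A : Type*} [Field k] [Ring A] [Algebra k A]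

theorem finite_mul (M N : Submodule k A) [Module.Finite k M] [Module.Finite k N] :
    Module.Finite k (M * N : Submodule k A) :=
  Module.Finite.iff_fg.2 ((Module.Finite.iff_fg.1 ‹_›).mul (Module.Finite.iff_fg.1 ‹_›))

theorem finrank_mul_le (M N : Submodule k A) [Module.Finite k M] [Module.Finite k N] :
    Module.finrank k (M * N : Submodule k A) ≤ Module.finrank k M * Module.finrank k N := by
  rw [← Submodule.mulMap_range, ← Module.finrank_tensorProduct (R := k)]
  exact (M.mulMap N).finrank_range_le

theorem finrank_le_add_mul_of_le_sup_mul {V J M N : Submodule k A} [Module.Finite k J]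
    [Module.Finite k M] [Module.Finite k N] (h : V ≤ J ⊔ M * N) :
    Module.finrank k V ≤ Module.finrank k J + Module.finrank k M * Module.finrank k N := by
  have := finite_mul M N
  calc Module.finrank k V ≤ Module.finrank k (J ⊔ M * N : Submodule k A) :=
        Submodule.finrank_mono h
    _ ≤ Module.finrank k J + Module.finrank k (M * N : Submodule k A) :=
        Submodule.finrank_add_le_finrank_add_finrank J (M * N)
    _ ≤ Module.finrank k J + Module.finrank k M * Module.finrank k N := by
        gcongr
        exact finrank_mul_le M N

end Mul

section Algebra

variable {k : Type} [Field k] {A : Type} [Ring A] [Algebra k A]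

section Ideal

variable (S : Set A)

theorem idealGen_eq_top_mul_span_mul_top : idealGen k S = ⊤ * Submodule.span k S * ⊤ := by
  rw [← Submodule.span_univ, Submodule.span_mul_span, Submodule.span_mul_span, idealGen]
  congr 1
  ext x
  simp only [Set.mem_mul, Set.mem_univ, true_and, Set.mem_ofPred_eq]
  grind

theorem span_le_idealGen : Submodule.span k S ≤ idealGen k S :=
  Submodule.span_mono fun f hf => ⟨1, 1, f, hf, by rw [one_mul, mul_one]⟩

theorem mul_idealGen_le (V : Submodule k A) : V * idealGen k S ≤ idealGen k S := by
  rw [idealGen_eq_top_mul_span_mul_top, ← mul_assoc, ← mul_assoc]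
  gcongr
  exact le_top

theorem idealGen_mul_le (V : Submodule k A) : idealGen k S * V ≤ idealGen k S := by
  rw [idealGen_eq_top_mul_span_mul_top, mul_assoc]
  gcongr
  exact le_top

theorem idealGen_empty : idealGen k (∅ : Set A) = ⊥ := by
  simp [idealGen]

variable {S} in
theorem idealGen_ne_bot_of_minimal (hS : S.Nonempty)
    (hmin : ∀ T ⊆ S, idealGen k T = idealGen k S → T = S) : idealGen k S ≠ ⊥ := fun h =>
  hS.ne_empty (hmin ∅ S.empty_subset (by rw [idealGen_empty, h])).symm

end Ideal

section QuotDim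

variable (𝒜 : ℕ → Submodule k A) (I : Submodule k A)

theorem exists_sup_eq_finrank_eq_quotDim (n : ℕ) :
    ∃ C ≤ 𝒜 n, I ⊓ 𝒜 n ⊔ C = 𝒜 n ∧ Module.finrank k C = quotDim k 𝒜 I n := by
  obtain ⟨C, hC⟩ := (I.comap (𝒜 n).subtype).exists_isCompl
  refine ⟨C.map (𝒜 n).subtype, Submodule.map_subtype_le _ _, ?_, ?_⟩
  · have := congrArg (Submodule.map (𝒜 n).subtype) hC.sup_eq_top
    rwa [Submodule.map_sup, Submodule.map_comap_subtype, Submodule.map_subtype_top,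
      inf_comm] at this
  · rw [Submodule.finrank_map_subtype_eq, quotDim]
    exact (Submodule.quotientEquivOfIsCompl _ _ hC).finrank_eq.symm

theorem quotDim_add_finrank_inf (n : ℕ) [Module.Finite k (𝒜 n)] :
    quotDim k 𝒜 I n + Module.finrank k (I ⊓ 𝒜 n : Submodule k A) = Module.finrank k (𝒜 n) := by
  rw [inf_comm, ← Submodule.map_comap_subtype, Submodule.finrank_map_subtype_eq, quotDim,
    Submodule.finrank_quotient_add_finrank]

end QuotDim

/-- A graded algebra is generated in degree one when its component of degree `n` is the `n`-th
power of the component of degree `1`; in degree `0` this says that the algebra is connected. -/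
def IsGeneratedInDegreeOne (𝒜 : ℕ → Submodule k A) : Prop :=
  ∀ n, 𝒜 n = 𝒜 1 ^ n

section Graded

variable {𝒜 : ℕ → Submodule k A}

theorem IsGeneratedInDegreeOne.mul_eq (h𝒜 : IsGeneratedInDegreeOne 𝒜) (m n : ℕ) :
    𝒜 m * 𝒜 n = 𝒜 (m + n) := by
  rw [h𝒜 (m + n), pow_add, ← h𝒜 m, ← h𝒜 n]

theorem quotDim_idealGen_add_le_mul [∀ n, Module.Finite k (𝒜 n)]
    (h𝒜 : IsGeneratedInDegreeOne 𝒜) (S : Set A) (m n : ℕ) :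
    quotDim k 𝒜 (idealGen k S) (m + n) ≤
      quotDim k 𝒜 (idealGen k S) m * quotDim k 𝒜 (idealGen k S) n := by
  set I := idealGen k S
  obtain ⟨C, hC, hIC, hCdim⟩ := exists_sup_eq_finrank_eq_quotDim 𝒜 I m
  obtain ⟨D, hD, hID, hDdim⟩ := exists_sup_eq_finrank_eq_quotDim 𝒜 I n
  have := Submodule.finiteDimensional_of_le hC
  have := Submodule.finiteDimensional_of_le hD
  have := Submodule.finiteDimensional_of_le (inf_le_right : I ⊓ 𝒜 (m + n) ≤ 𝒜 (m + n))
  have hleft : (I ⊓ 𝒜 m) * 𝒜 n ≤ I ⊓ 𝒜 (m + n) :=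
    le_inf ((mul_le_mul_left inf_le_left _).trans (idealGen_mul_le S _))
      ((mul_le_mul_left inf_le_right _).trans (h𝒜.mul_eq m n).le)
  have hright : C * (I ⊓ 𝒜 n) ≤ I ⊓ 𝒜 (m + n) :=
    le_inf ((mul_le_mul_right inf_le_left _).trans (mul_idealGen_le S _))
      ((mul_le_mul' hC inf_le_right).trans (h𝒜.mul_eq m n).le)
  have hcover : 𝒜 (m + n) ≤ I ⊓ 𝒜 (m + n) ⊔ C * D :=
    calc 𝒜 (m + n) = (I ⊓ 𝒜 m) * 𝒜 n ⊔ (C * (I ⊓ 𝒜 n) ⊔ C * D) := by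
          rw [← Submodule.mul_sup, hID, ← Submodule.sup_mul, hIC, h𝒜.mul_eq]
      _ ≤ I ⊓ 𝒜 (m + n) ⊔ C * D :=
          sup_le (hleft.trans le_sup_left) (sup_le_sup_right hright _)
  have hdim := quotDim_add_finrank_inf 𝒜 I (m + n)
  have hle := finrank_le_add_mul_of_le_sup_mul hcover
  rw [hCdim, hDdim] at hle
  omega

theorem idealGen_inf_mul_span_le (h𝒜 : IsGeneratedInDegreeOne 𝒜) {S : Set A} {p : ℕ}
    (hS : Submodule.span k S ≤ 𝒜 (p + 1)) (m : ℕ) :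
    (idealGen k S ⊓ 𝒜 m) * Submodule.span k S ≤ (idealGen k S ⊓ 𝒜 (m + p)) * 𝒜 1 := by
  calc (idealGen k S ⊓ 𝒜 m) * Submodule.span k S ≤ (idealGen k S ⊓ 𝒜 m) * (𝒜 p * 𝒜 1) := by
        gcongr; exact hS.trans (h𝒜.mul_eq p 1).ge
    _ = (idealGen k S ⊓ 𝒜 m) * 𝒜 p * 𝒜 1 := (mul_assoc _ _ _).symm
    _ ≤ (idealGen k S ⊓ 𝒜 (m + p)) * 𝒜 1 := by
        gcongr
        exact le_inf ((mul_le_mul_left inf_le_left _).trans (idealGen_mul_le S _))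
          ((mul_le_mul_left inf_le_right _).trans (h𝒜.mul_eq m p).le)

variable [GradedAlgebra 𝒜] {S : Set A}

variable (𝒜 S) in
theorem idealGen_eq_iSup :
    idealGen k S = ⨆ d : ℕ × ℕ, 𝒜 d.1 * Submodule.span k S * 𝒜 d.2 := by
  rw [idealGen_eq_top_mul_span_mul_top,
    ← (DirectSum.Decomposition.isInternal 𝒜).submodule_iSup_eq_top, iSup_prod]
  rw [Submodule.iSup_mul, Submodule.iSup_mul]
  simp only [Submodule.mul_iSup]

theorem idealGen_inf_le_iSup {l : ℕ} (hS : Submodule.span k S ≤ 𝒜 l) (n : ℕ) :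
    idealGen k S ⊓ 𝒜 n ≤
      ⨆ (d : ℕ × ℕ) (_ : d.1 + l + d.2 = n), 𝒜 d.1 * Submodule.span k S * 𝒜 d.2 := by
  have mul_le (i j : ℕ) : 𝒜 i * 𝒜 j ≤ 𝒜 (i + j) :=
    Submodule.mul_le.2 fun _ hx _ hy => SetLike.mul_mem_graded hx hy
  have hW (d : ℕ × ℕ) : 𝒜 d.1 * Submodule.span k S * 𝒜 d.2 ≤ 𝒜 (d.1 + l + d.2) :=
    calc 𝒜 d.1 * Submodule.span k S * 𝒜 d.2 ≤ 𝒜 d.1 * 𝒜 l * 𝒜 d.2 := by gcongr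
      _ ≤ 𝒜 (d.1 + l) * 𝒜 d.2 := by gcongr; exact mul_le _ _
      _ ≤ 𝒜 (d.1 + l + d.2) := mul_le _ _
  rw [idealGen_eq_iSup 𝒜 S]
  exact iSup_inf_component_le 𝒜 hW n

theorem idealGen_inf_eq_bot_of_lt {l n : ℕ} (hS : Submodule.span k S ≤ 𝒜 l) (hn : n < l) :
    idealGen k S ⊓ 𝒜 n = ⊥ :=
  le_bot_iff.1 <| (idealGen_inf_le_iSup hS n).trans <| iSup₂_le fun d hd => by omega

theorem idealGen_inf_succ_le (h𝒜 : IsGeneratedInDegreeOne 𝒜) {p : ℕ}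
    (hS : Submodule.span k S ≤ 𝒜 (p + 1)) (m : ℕ) :
    idealGen k S ⊓ 𝒜 (m + p + 1) ≤
      (idealGen k S ⊓ 𝒜 (m + p)) * 𝒜 1 ⊔ 𝒜 m * Submodule.span k S := by
  refine (idealGen_inf_le_iSup hS _).trans (iSup₂_le ?_)
  rintro ⟨i, j⟩ hij
  cases j with
  | zero =>
    obtain rfl : i = m := by grind
    rw [h𝒜 0, pow_zero, mul_one]
    exact le_sup_right
  | succ j =>
    obtain hij : i + (p + 1) + j = m + p := by grind
    refine le_sup_of_le_left ?_
    rw [← h𝒜.mul_eq j 1, ← mul_assoc]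
    gcongr
    refine le_inf ?_ ?_
    · calc 𝒜 i * Submodule.span k S * 𝒜 j ≤ 𝒜 i * idealGen k S * 𝒜 j := by
            gcongr; exact span_le_idealGen S
        _ ≤ idealGen k S * 𝒜 j := by gcongr; exact mul_idealGen_le S _
        _ ≤ idealGen k S := idealGen_mul_le S _
    · calc 𝒜 i * Submodule.span k S * 𝒜 j ≤ 𝒜 i * 𝒜 (p + 1) * 𝒜 j := by gcongr
        _ = 𝒜 (m + p) := by rw [h𝒜.mul_eq, h𝒜.mul_eq, hij]

theorem finrank_idealGen_inf_succ_le [∀ n, Module.Finite k (𝒜 n)]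
    (h𝒜 : IsGeneratedInDegreeOne 𝒜) {p : ℕ} (hS : Submodule.span k S ≤ 𝒜 (p + 1)) (m : ℕ) :
    Module.finrank k (idealGen k S ⊓ 𝒜 (m + p + 1) : Submodule k A) ≤
      Module.finrank k (idealGen k S ⊓ 𝒜 (m + p) : Submodule k A) * Module.finrank k (𝒜 1) +
        quotDim k 𝒜 (idealGen k S) m * Module.finrank k (Submodule.span k S) := by
  set I := idealGen k S
  obtain ⟨C, hC, hIC, hCdim⟩ := exists_sup_eq_finrank_eq_quotDim 𝒜 I m
  have := Submodule.finiteDimensional_of_le hC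
  have := Submodule.finiteDimensional_of_le hS
  have := Submodule.finiteDimensional_of_le (inf_le_right : I ⊓ 𝒜 (m + p) ≤ 𝒜 (m + p))
  have := finite_mul (I ⊓ 𝒜 (m + p)) (𝒜 1)
  have hcover : I ⊓ 𝒜 (m + p + 1) ≤ (I ⊓ 𝒜 (m + p)) * 𝒜 1 ⊔ C * Submodule.span k S :=
    calc I ⊓ 𝒜 (m + p + 1)
        ≤ (I ⊓ 𝒜 (m + p)) * 𝒜 1 ⊔ 𝒜 m * Submodule.span k S := idealGen_inf_succ_le h𝒜 hS m
      _ = (I ⊓ 𝒜 (m + p)) * 𝒜 1 ⊔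
            ((I ⊓ 𝒜 m) * Submodule.span k S ⊔ C * Submodule.span k S) := by
          rw [← Submodule.sup_mul, hIC]
      _ ≤ (I ⊓ 𝒜 (m + p)) * 𝒜 1 ⊔ C * Submodule.span k S :=
          sup_le le_sup_left (sup_le_sup_right (idealGen_inf_mul_span_le h𝒜 hS m) _)
  have hle := finrank_le_add_mul_of_le_sup_mul hcover
  rw [hCdim] at hle
  exact hle.trans (Nat.add_le_add_right (finrank_mul_le _ _) _)

end Graded

end Algebra

section FreeAlgebra

open scoped DirectSum

variable (k : Type) [Field k] (X : Type)

theorem freeDeg_one : freeDeg k X 1 = Submodule.span k (Set.range (FreeAlgebra.ι k)) :=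
  pow_one _

theorem isGeneratedInDegreeOne_freeDeg : IsGeneratedInDegreeOne (freeDeg k X) := fun n => by
  rw [freeDeg_one, freeDeg]

instance finite_freeDeg [Finite X] (n : ℕ) : Module.Finite k (freeDeg k X n) :=
  Module.Finite.iff_fg.2 ((Submodule.fg_span (Set.finite_range _)).pow n)

instance gradedMonoid_freeDeg : SetLike.GradedMonoid (freeDeg k X) :=
  Submodule.nat_power_gradedMonoid _

theorem ι_mem_freeDeg_one (x : X) : FreeAlgebra.ι k x ∈ freeDeg k X 1 := by
  rw [freeDeg_one]
  exact Submodule.subset_span ⟨x, rfl⟩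

/-- The algebra homomorphism from the free algebra to the direct sum of its components `freeDeg`
that places every generator in degree `1`. It splits an element into its homogeneous parts. -/
noncomputable def freeDecompose : FreeAlgebra k X →ₐ[k] ⨁ n, freeDeg k X n :=
  FreeAlgebra.lift k fun x =>
    DirectSum.of (fun n => freeDeg k X n) 1 ⟨FreeAlgebra.ι k x, ι_mem_freeDeg_one k X x⟩

theorem freeDecompose_of_mem_one {x : FreeAlgebra k X} (hx : x ∈ freeDeg k X 1) :
    freeDecompose k X x = DirectSum.of (fun n => freeDeg k X n) 1 ⟨x, hx⟩ := by
  have hspan := hx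
  rw [freeDeg_one] at hspan
  induction hspan using Submodule.span_induction with
  | mem x hrange =>
    obtain ⟨i, rfl⟩ := hrange
    rw [freeDecompose, FreeAlgebra.lift_ι_apply]
  | zero => rw [map_zero]; exact (map_zero _).symm
  | add x y hxspan hyspan ihx ihy =>
    rw [← freeDeg_one] at hxspan hyspan
    rw [map_add, ihx hxspan, ihy hyspan, ← map_add]; rfl
  | smul c x hxspan ih =>
    rw [← freeDeg_one] at hxspan
    rw [map_smul, ih hxspan, ← DirectSum.lof_eq_of k, ← map_smul]; rfl

theorem freeDecompose_of_mem {n : ℕ} {x : FreeAlgebra k X} (hx : x ∈ freeDeg k X n) :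
    freeDecompose k X x = DirectSum.of (fun n => freeDeg k X n) n ⟨x, hx⟩ := by
  induction hx using Submodule.pow_induction_on_left' with
  | algebraMap r => rw [AlgHom.commutes, DirectSum.algebraMap_apply]; rfl
  | add x y n hx hy ihx ihy => rw [map_add, ihx, ihy, ← map_add]; rfl
  | mem_mul x hx n y hy ih =>
    rw [← freeDeg_one] at hx
    rw [map_mul, ih, freeDecompose_of_mem_one k X hx, DirectSum.of_mul_of]
    exact DirectSum.of_eq_of_gradedMonoid_eq (Sigma.subtype_ext (add_comm _ _) rfl)

noncomputable instance gradedAlgebra_freeDeg : GradedAlgebra (freeDeg k X) :=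
  GradedAlgebra.ofAlgHom _ (freeDecompose k X) (by ext x; simp [freeDecompose])
    fun _ x => freeDecompose_of_mem k X x.2

theorem freeDeg_eq_span_range (n : ℕ) :
    freeDeg k X n = Submodule.span k (Set.range (FreeAlgebra.basisFreeMonoid k X ∘
      fun w : Fin n → X => FreeMonoid.ofList (List.ofFn w))) := by
  have hbasis (w : List X) : FreeAlgebra.basisFreeMonoid k X (FreeMonoid.ofList w) =
      (w.map (FreeAlgebra.ι k)).prod := by
    simp [FreeAlgebra.basisFreeMonoid, FreeAlgebra.equivMonoidAlgebraFreeMonoid]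
  have hsurj : Function.Surjective fun (w : Fin n → X) i =>
      Set.rangeFactorization (FreeAlgebra.ι k) (w i) :=
    Set.rangeFactorization_surjective.comp_left
  rw [freeDeg, Submodule.span_pow]
  congr 1
  ext x
  simp only [Set.mem_pow, Set.mem_range, hbasis, List.map_ofFn, hsurj.exists,
    Set.rangeFactorization_coe, Function.comp_def]

theorem finrank_freeDeg (n : ℕ) : Module.finrank k (freeDeg k X n) = Nat.card X ^ n := by
  have hinj : Function.Injective fun w : Fin n → X => FreeMonoid.ofList (List.ofFn w) :=
    FreeMonoid.ofList.injective.comp List.ofFn_injective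
  rw [freeDeg_eq_span_range, Module.finrank_eq_nat_card_basis
    (Module.Basis.span ((FreeAlgebra.basisFreeMonoid k X).linearIndependent.comp _ hinj)),
    Nat.card_fun, Nat.card_fin]

end FreeAlgebra

section Govorov

variable {k : Type} [Field k] {X : Type} [Finite X] {S : Set (FreeAlgebra k X)}

theorem quotDim_freeDeg_add_finrank_inf (I : Submodule k (FreeAlgebra k X)) (n : ℕ) :
    quotDim k (freeDeg k X) I n + Module.finrank k (I ⊓ freeDeg k X n : Submodule k _) =
      Nat.card X ^ n := by
  rw [quotDim_add_finrank_inf, finrank_freeDeg]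

theorem quotDim_idealGen_eq_pow_of_lt {l n : ℕ} (hS : Submodule.span k S ≤ freeDeg k X l)
    (hn : n < l) : quotDim k (freeDeg k X) (idealGen k S) n = Nat.card X ^ n := by
  rw [← quotDim_freeDeg_add_finrank_inf (idealGen k S) n, idealGen_inf_eq_bot_of_lt hS hn,
    finrank_bot, add_zero]

theorem quotDim_idealGen_lt_pow {l : ℕ} (hS : Submodule.span k S ≤ freeDeg k X l)
    (hne : idealGen k S ≠ ⊥) :
    quotDim k (freeDeg k X) (idealGen k S) l < Nat.card X ^ l := by
  have hspan : Submodule.span k S ≠ ⊥ := fun h => hne (by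
    rw [idealGen_eq_top_mul_span_mul_top, h, Submodule.mul_bot, Submodule.bot_mul])
  have := Submodule.finiteDimensional_of_le
    (inf_le_right : idealGen k S ⊓ freeDeg k X l ≤ freeDeg k X l)
  have hpos : 0 < Module.finrank k (idealGen k S ⊓ freeDeg k X l : Submodule k _) :=
    Nat.pos_of_ne_zero fun h => hspan <| le_bot_iff.1 <|
      (le_inf (span_le_idealGen S) hS).trans (Submodule.finrank_eq_zero.1 h).le
  have := quotDim_freeDeg_add_finrank_inf (idealGen k S) l
  omega

theorem card_mul_quotDim_idealGen_le {p : ℕ} (hS : Submodule.span k S ≤ freeDeg k X (p + 1))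
    (m : ℕ) :
    Nat.card X * quotDim k (freeDeg k X) (idealGen k S) (m + p) ≤
      quotDim k (freeDeg k X) (idealGen k S) (m + p + 1) +
        Module.finrank k (Submodule.span k S) * quotDim k (freeDeg k X) (idealGen k S) m := by
  have hstep := finrank_idealGen_inf_succ_le (isGeneratedInDegreeOne_freeDeg k X) hS m
  have hn := quotDim_freeDeg_add_finrank_inf (idealGen k S) (m + p)
  have hn' := quotDim_freeDeg_add_finrank_inf (idealGen k S) (m + p + 1)
  rw [finrank_freeDeg, pow_one] at hstep
  rw [pow_succ, ← hn] at hn'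
  linarith

theorem stmt1_general {l : ℕ} (hl : 1 ≤ l) (hdeg : ∀ f ∈ S, f ∈ freeDeg k X l)
    (hne : idealGen k S ≠ ⊥) :
    Summable (fun n => (quotDim k (freeDeg k X) (idealGen k S) n : ℝ) * (Nat.card X : ℝ)⁻¹ ^ n) ∧
    (Nat.card X : ℝ) ^ l /
        (∑' n, (quotDim k (freeDeg k X) (idealGen k S) n : ℝ) * (Nat.card X : ℝ)⁻¹ ^ n) ≤
      Module.finrank k (Submodule.span k S) := by
  obtain ⟨p, rfl⟩ := Nat.exists_eq_add_of_le' hl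
  have hS : Submodule.span k S ≤ freeDeg k X (p + 1) := Submodule.span_le.2 hdeg
  have hlt := quotDim_idealGen_lt_pow hS hne
  have hs : (0 : ℝ) < Nat.card X := by
    exact_mod_cast Nat.pos_of_ne_zero fun h => by simp [h] at hlt
  have hsum := summable_mul_pow_of_submultiplicative (l := p + 1)
    (a := fun n => quotDim k (freeDeg k X) (idealGen k S) n) (fun n => Nat.cast_nonneg _)
    (inv_nonneg.2 hs.le)
    (fun m n => mod_cast quotDim_idealGen_add_le_mul (isGeneratedInDegreeOne_freeDeg k X) S m n)
    (by rw [inv_pow, ← div_eq_mul_inv, div_lt_one (by positivity)]; exact_mod_cast hlt)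
  exact ⟨hsum, pow_succ_div_tsum_le (fun n => Nat.cast_nonneg _) hs hsum
    (mod_cast quotDim_idealGen_eq_pow_of_lt hS p.lt_succ_self)
    fun n => mod_cast card_mul_quotDim_idealGen_le hS n⟩

end Govorov

theorem finrank_span_le_ncard {K M : Type*} [Field K] [AddCommGroup M] [Module K M] {S : Set M}
    (hS : S.Finite) : Module.finrank K (Submodule.span K S) ≤ S.ncard := by
  have := hS.fintype
  rw [Set.ncard_eq_toFinset_card']
  exact finrank_span_le_card S

/-- **Govorov's first inequality** (part of Theorem 3.1).  If `I ⊴ F_s` is minimally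
generated by `t` homogeneous elements of degree `l` and `R = F_s/I` with `a n = dim R_n`,
then `Σ a_n s^{-n}` converges and `t ≥ s^l / Σ a_n s^{-n}`. -/
theorem stmt1 {k : Type} [Field k] (s l t : ℕ) (hs : 1 ≤ s) (hl : 2 ≤ l) (ht : 1 ≤ t)
    (α : Set (FreeAlgebra k (Fin s))) (hαfin : α.Finite) (hcard : α.ncard = t)
    (hdeg : ∀ f ∈ α, f ∈ freeDeg k (Fin s) l)
    (I : Submodule k (FreeAlgebra k (Fin s)))
    (hgen : idealGen k α = I)
    (hmin : ∀ β ⊆ α, idealGen k β = I → β = α)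
    (a : ℕ → ℕ) (ha : ∀ n, a n = quotDim k (freeDeg k (Fin s)) I n) :
    Summable (fun n => (a n : ℝ) * ((s : ℝ)⁻¹) ^ n) ∧
    (s : ℝ) ^ l / (∑' n, (a n : ℝ) * ((s : ℝ)⁻¹) ^ n) ≤ (t : ℝ) := by
  subst hgen hcard
  have hne := idealGen_ne_bot_of_minimal ((Set.ncard_pos hαfin).1 ht) hmin
  simpa only [ha, Nat.card_fin] using (stmt1_general (one_le_two.trans hl) hdeg hne).imp_right
    fun hle => hle.trans (mod_cast finrank_span_le_ncard hαfin)
end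

section
/- Let A = k⟨X⟩/I_A and B = k⟨Y⟩/I_B be connected graded algebras, and let C = k⟨X ⊔ Y⟩/J be the free product A*B, where J is the two-sided ideal generated by I_A ∪ I_B. Then the Hilbert series satisfy C(t)^{−1} = A(t)^{−1} + B(t)^{−1} − 1 as formal power series (all three series are invertible since their constant terms equal 1). -/
open scoped ENNReal NNReal
open PowerSeries

noncomputable section

/-- A `k`-submodule which is a two-sided ideal. -/
def IsTwoSidedSub {k A : Type} [Field k] [Ring A] [Algebra k A] (I : Submodule k A) : Prop :=
  ∀ a : A, ∀ x ∈ I, a * x ∈ I ∧ x * a ∈ I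

/-- The weight-`n` homogeneous component of the free algebra `k⟨X⟩`, where the generators
are given weights by `w : X → ℕ`: the span of all products of generators of total
weight `n`. -/
def wdeg (k : Type) [Field k] {X : Type} (w : X → ℕ) (n : ℕ) :
    Submodule k (FreeAlgebra k X) :=
  Submodule.span k
    {a | ∃ l : List X, (l.map w).sum = n ∧ a = (l.map (FreeAlgebra.ι k)).prod}

/-- A submodule is homogeneous w.r.t. a family of components `𝒜` if it is spanned by
its homogeneous elements. -/
def IsHomogSpan {k A : Type} [Field k] [Ring A] [Algebra k A]
    (𝒜 : ℕ → Submodule k A) (I : Submodule k A) : Prop :=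
  I ≤ Submodule.span k {x : A | x ∈ I ∧ ∃ n, x ∈ 𝒜 n}

end

/-!
Let `A i` be finitely many connected graded algebras. A homogeneous basis of each `A i` that
contains `1` yields a homogeneous basis of the free product `C`, formed by the products of
alternating words in the basis elements other than `1`. These products span because their span is
stable under left multiplication by every `A i`. For independence (van der Waerden's trick), let
`V` be the free module on the alternating words and `Q i` the free module on those that do not
start with a letter from `A i`: splitting off the first letter gives `V ≃ A i ⊗ Q i`, hence an
action of each `A i`, and so of `C`, on `V`, under which the product of a word sends the empty word
to that word.

The same splitting gives `C(t) = A i(t) * Q i(t)`, while a nonempty word has exactly one first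
letter, so `C(t) = 1 + ∑ i, (C(t) - Q i(t))`. Dividing by `C(t)` yields
`C(t)⁻¹ = 1 + ∑ i, (A i(t)⁻¹ - 1)`.
-/

open Submodule

/-! ### The weight grading of the free algebra -/

namespace wdeg

variable {k : Type} [Field k] {X : Type} (w : X → ℕ)

lemma ι_mem (x : X) : FreeAlgebra.ι k x ∈ wdeg k w (w x) :=
  subset_span ⟨[x], by simp, by simp⟩

instance gradedMonoid : SetLike.GradedMonoid (wdeg k w) where
  one_mem := subset_span ⟨[], rfl, rfl⟩
  mul_mem m n a b ha hb := by
    have hab := Submodule.mul_mem_mul ha hb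
    rw [wdeg, wdeg, span_mul_span] at hab
    refine span_mono ?_ hab
    rintro _ ⟨_, ⟨l, rfl, rfl⟩, _, ⟨l', rfl, rfl⟩, rfl⟩
    exact ⟨l ++ l', by simp, by simp⟩

instance gradedAlgebra : GradedAlgebra (wdeg k w) := by
  let decompose : FreeAlgebra k X →ₐ[k] DirectSum ℕ fun n => wdeg k w n :=
    FreeAlgebra.lift k fun x => DirectSum.of (fun n => wdeg k w n) (w x) ⟨_, ι_mem w x⟩
  have decompose_word (l : List X) (h : (l.map (FreeAlgebra.ι k)).prod ∈ wdeg k w (l.map w).sum) :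
      decompose (l.map (FreeAlgebra.ι k)).prod = DirectSum.of (fun n => wdeg k w n) _ ⟨_, h⟩ := by
    induction l with
    | nil => simp only [List.map_nil, List.prod_nil, map_one]; rfl
    | cons x l ih =>
      simp only [List.map_cons, List.prod_cons, map_mul, decompose,
        FreeAlgebra.lift_ι_apply] at ih ⊢
      rw [ih (subset_span ⟨l, rfl, rfl⟩), DirectSum.of_mul_of]
      rfl
  refine GradedAlgebra.ofAlgHom _ decompose ?_ ?_
  · ext x
    simp [decompose]
  · rintro n ⟨a, ha⟩
    induction ha using span_induction with
    | mem a ha =>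
      obtain ⟨l, rfl, rfl⟩ := ha
      exact decompose_word l _
    | zero => simp only [map_zero]; exact (map_zero (DirectSum.of (fun n => wdeg k w n) n)).symm
    | add a b ha hb iha ihb =>
      simp only [map_add, iha, ihb]
      exact (map_add (DirectSum.of (fun n => wdeg k w n) n) ⟨a, ha⟩ ⟨b, hb⟩).symm
    | smul c a ha iha =>
      simp only [map_smul, iha]
      exact ((DirectSum.lof k ℕ (fun n => wdeg k w n) n).map_smul c ⟨a, ha⟩).symm

variable {w}

lemma finite_words (hw : ∀ x, 1 ≤ w x) (hf : ∀ n, {x | w x = n}.Finite) (n : ℕ) :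
    {l : List X | (l.map w).sum = n}.Finite := by
  have : Finite {x // w x ≤ n} := (Set.finite_Iic n).preimage' fun m _ => hf m
  refine ((List.finite_length_le {x // w x ≤ n} n).image (List.map Subtype.val)).subset ?_
  rintro l (hl : (l.map w).sum = n)
  have length_le : l.length ≤ n := by
    simpa [hl] using List.card_nsmul_le_sum (l.map w) 1 (by simpa using fun x _ => hw x)
  have weight_le (x : X) (hx : x ∈ l) : w x ≤ n :=
    hl ▸ List.le_sum_of_mem (List.mem_map_of_mem hx)
  lift l to List {x // w x ≤ n} using weight_le
  exact ⟨l, by simpa using length_le, rfl⟩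

lemma module_finite (hw : ∀ x, 1 ≤ w x) (hf : ∀ n, {x | w x = n}.Finite) (n : ℕ) :
    Module.Finite k (wdeg k w n) := by
  refine Module.Finite.span_of_finite k (((finite_words hw hf n).image
    fun l => (l.map (FreeAlgebra.ι k)).prod).subset ?_)
  rintro _ ⟨l, hl, rfl⟩
  exact ⟨l, hl, rfl⟩

lemma lift_ι_comp_mem {Z : Type} {w : Z → ℕ} {j : X → Z} {n : ℕ} {a : FreeAlgebra k X}
    (ha : a ∈ wdeg k (w ∘ j) n) :
    FreeAlgebra.lift k (fun x => FreeAlgebra.ι k (j x)) a ∈ wdeg k w n := by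
  revert a
  suffices h : wdeg k (w ∘ j) n ≤ (wdeg k w n).comap
      (FreeAlgebra.lift k (fun x => FreeAlgebra.ι k (j x))).toLinearMap from @h
  refine span_le.2 ?_
  rintro _ ⟨l, rfl, rfl⟩
  refine subset_span ⟨l.map j, by simp, ?_⟩
  simp [map_list_prod, Function.comp_def]

end wdeg

/-! ### Homogeneous ideals -/

section HomogeneousIdeals

variable {k : Type} [Field k] {A : Type} [Ring A] [Algebra k A]

lemma isTwoSidedSub_idealGen (S : Set A) : IsTwoSidedSub (idealGen k S) := by
  intro a x hx
  constructor
  · suffices h : idealGen k S ≤ (idealGen k S).comap (LinearMap.mulLeft k a) from h hx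
    refine span_le.2 ?_
    rintro _ ⟨b, c, s, hs, rfl⟩
    exact subset_span ⟨a * b, c, s, hs, by simp [mul_assoc]⟩
  · suffices h : idealGen k S ≤ (idealGen k S).comap (LinearMap.mulRight k a) from h hx
    refine span_le.2 ?_
    rintro _ ⟨b, c, s, hs, rfl⟩
    exact subset_span ⟨b, c * a, s, hs, by simp [mul_assoc]⟩

lemma subset_idealGen (S : Set A) : S ⊆ idealGen k S :=
  fun s hs => subset_span ⟨1, 1, s, hs, by simp⟩

lemma idealGen_eq_mul (S : Set A) : idealGen k S = ⊤ * span k S * ⊤ := by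
  rw [← span_univ, span_mul_span, span_mul_span, idealGen]
  congr 1
  ext x
  simp only [Set.mem_mul, Set.mem_univ, true_and]
  constructor
  · rintro ⟨a, b, s, hs, rfl⟩
    exact ⟨a * s, ⟨a, s, hs, rfl⟩, b, rfl⟩
  · rintro ⟨_, ⟨a, s, hs, rfl⟩, b, rfl⟩
    exact ⟨a, b, s, hs, rfl⟩

/-- A `k`-submodule that is a two-sided ideal, as a term of `Ideal A`, so that it can be divided
out as a ring. -/
def IsTwoSidedSub.toIdeal {I : Submodule k A} (hI : IsTwoSidedSub I) : Ideal A where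
  __ := I
  smul_mem' a x hx := (hI a x hx).1

instance {I : Submodule k A} (hI : IsTwoSidedSub I) : hI.toIdeal.IsTwoSided where
  mul_mem_of_left b ha := (hI b _ ha).2

/-- The quotient algebra of `A` by a two-sided ideal given as a submodule. -/
abbrev IsTwoSidedSub.Quotient {I : Submodule k A} (hI : IsTwoSidedSub I) : Type :=
  A ⧸ hI.toIdeal

/-- The projection of `A` onto its quotient by a two-sided ideal given as a submodule. -/
abbrev IsTwoSidedSub.mk {I : Submodule k A} (hI : IsTwoSidedSub I) : A →ₐ[k] hI.Quotient :=
  Ideal.Quotient.mkₐ k hI.toIdeal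

lemma IsTwoSidedSub.mk_eq_zero_iff {I : Submodule k A} (hI : IsTwoSidedSub I) {a : A} :
    hI.mk a = 0 ↔ a ∈ I :=
  Ideal.Quotient.eq_zero_iff_mem

lemma IsTwoSidedSub.ker_mk {I : Submodule k A} (hI : IsTwoSidedSub I) :
    LinearMap.ker hI.mk.toLinearMap = I :=
  Submodule.ext fun _ => hI.mk_eq_zero_iff

lemma IsTwoSidedSub.one_notMem {I : Submodule k A} (hI : IsTwoSidedSub I) (hne : I ≠ ⊤) :
    (1 : A) ∉ I :=
  fun h => hne (eq_top_iff.2 fun a _ => by simpa using (hI a 1 h).1)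

lemma quotDim_ker {M : Type*} [AddCommGroup M] [Module k M] (𝒜 : ℕ → Submodule k A)
    (π : A →ₗ[k] M) (n : ℕ) :
    quotDim k 𝒜 (LinearMap.ker π) n = Module.finrank k ((𝒜 n).map π) := by
  rw [quotDim, ← LinearMap.range_domRestrict]
  exact (π.domRestrict (𝒜 n)).quotKerEquivRange.finrank_eq

variable {𝒜 : ℕ → Submodule k A} [GradedAlgebra 𝒜]

lemma IsHomogSpan.proj_mem {I : Submodule k A} (hI : IsHomogSpan 𝒜 I) {a : A} (ha : a ∈ I)
    (n : ℕ) : GradedAlgebra.proj 𝒜 n a ∈ I := by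
  suffices h : I ≤ I.comap (GradedAlgebra.proj 𝒜 n) from h ha
  refine hI.trans (span_le.2 ?_)
  rintro x ⟨hx, m, hm⟩
  rw [SetLike.mem_coe, mem_comap, GradedAlgebra.proj_apply, DirectSum.decompose_of_mem 𝒜 hm,
    DirectSum.coe_of_apply]
  split_ifs
  exacts [hx, I.zero_mem]

variable (𝒜) in
lemma span_homogeneous_eq_top : span k {x | ∃ n, x ∈ 𝒜 n} = ⊤ := by
  refine eq_top_iff.2 fun a _ => ?_
  induction a using DirectSum.Decomposition.inductionOn 𝒜 with
  | zero => exact zero_mem _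
  | homogeneous a => exact subset_span ⟨_, a.2⟩
  | add a b ha hb => exact add_mem (ha trivial) (hb trivial)

lemma isHomogSpan_idealGen {S : Set A} (hS : S ⊆ span k {x | x ∈ S ∧ ∃ n, x ∈ 𝒜 n}) :
    IsHomogSpan 𝒜 (idealGen k S) := by
  calc idealGen k S = ⊤ * span k S * ⊤ := idealGen_eq_mul S
    _ ≤ span k {x | ∃ n, x ∈ 𝒜 n} * span k {x | x ∈ S ∧ ∃ n, x ∈ 𝒜 n} *
          span k {x | ∃ n, x ∈ 𝒜 n} := by
        rw [span_homogeneous_eq_top]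
        exact mul_le_mul' (mul_le_mul' le_rfl (span_le.2 hS)) le_rfl
    _ ≤ _ := by
        rw [span_mul_span, span_mul_span]
        refine span_mono ?_
        rintro _ ⟨_, ⟨a, ⟨l, ha⟩, s, ⟨hs, m, hm⟩, rfl⟩, b, ⟨n, hb⟩, rfl⟩
        exact ⟨subset_span ⟨a, b, s, hs, rfl⟩, _,
          SetLike.mul_mem_graded (SetLike.mul_mem_graded ha hm) hb⟩

lemma isHomogSpan_idealGen_iUnion_image {ι : Type*} {B : ι → Type} [∀ i, Ring (B i)]
    [∀ i, Algebra k (B i)] {ℬ : ∀ i, ℕ → Submodule k (B i)} {I : ∀ i, Submodule k (B i)}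
    (hI : ∀ i, IsHomogSpan (ℬ i) (I i)) (f : ∀ i, B i →ₐ[k] A)
    (hf : ∀ i n, ∀ y ∈ ℬ i n, f i y ∈ 𝒜 n) :
    IsHomogSpan 𝒜 (idealGen k (⋃ i, f i '' I i)) := by
  refine isHomogSpan_idealGen (Set.iUnion_subset fun i => ?_)
  rintro _ ⟨y, hy, rfl⟩
  have hy' := mem_map_of_mem (f := (f i).toLinearMap) (hI i hy)
  rw [map_span] at hy'
  refine span_mono ?_ hy'
  rintro _ ⟨y, ⟨hy, n, hn⟩, rfl⟩
  exact ⟨Set.mem_iUnion.2 ⟨i, y, hy, rfl⟩, n, hf i n y hn⟩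

end HomogeneousIdeals

/-! ### Homogeneous bases -/

/-- A basis `b` is homogeneous, `d` being the degrees of its members, for the family `ℳ` of
components of a graded module: each `ℳ n` is spanned by the basis vectors of degree `n`. -/
def IsHomogeneousBasis {k M S : Type*} [Field k] [AddCommGroup M] [Module k M]
    (ℳ : ℕ → Submodule k M) (b : Module.Basis S k M) (d : S → ℕ) : Prop :=
  ∀ n, ℳ n = span k (b '' {s | d s = n})

namespace IsHomogeneousBasis

variable {k S M : Type*} [Field k] [AddCommGroup M] [Module k M] {ℳ : ℕ → Submodule k M}
  {b : Module.Basis S k M} {d : S → ℕ}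

/-- The basis of a homogeneous component consisting of the basis vectors of that degree. -/
noncomputable def component (h : IsHomogeneousBasis ℳ b d) (n : ℕ) :
    Module.Basis {s // d s = n} k (ℳ n) :=
  (Module.Basis.span (b.linearIndependent.comp _ Subtype.val_injective)).map
    (LinearEquiv.ofEq _ _ (by rw [h n, Set.range_comp, Subtype.range_coe_subtype]))

lemma mem (h : IsHomogeneousBasis ℳ b d) (s : S) : b s ∈ ℳ (d s) :=
  h (d s) ▸ subset_span ⟨s, rfl, rfl⟩

lemma finrank_eq (h : IsHomogeneousBasis ℳ b d) (n : ℕ) :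
    Module.finrank k (ℳ n) = Nat.card {s // d s = n} :=
  Module.finrank_eq_nat_card_basis (h.component n)

lemma finite (h : IsHomogeneousBasis ℳ b d) (n : ℕ) [Module.Finite k (ℳ n)] :
    Finite {s // d s = n} :=
  Module.Finite.finite_basis (h.component n)

end IsHomogeneousBasis

section QuotientBasis

universe u

variable {k : Type} [Field k] {A : Type} [Ring A] [Algebra k A] {𝒜 : ℕ → Submodule k A}
  [GradedAlgebra 𝒜] {M : Type u} [AddCommGroup M] [Module k M] {π : A →ₗ[k] M}

lemma isHomogeneousBasis_map {S : Type*} (hπ : IsHomogSpan 𝒜 (LinearMap.ker π))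
    (b : Module.Basis S k M) {d : S → ℕ} (hb : ∀ s, b s ∈ (𝒜 (d s)).map π) :
    IsHomogeneousBasis (fun n => (𝒜 n).map π) b d := by
  intro n
  choose u hu hub using hb
  have ker_sup_span : LinearMap.ker π ⊔ span k (Set.range u) = ⊤ := by
    rw [sup_comm, ← comap_map_eq, map_span, ← Set.range_comp, show π ∘ u = b from funext hub,
      b.span_eq, comap_top]
  have π_proj_mem (a : A) : π (GradedAlgebra.proj 𝒜 n a) ∈ span k (b '' {s | d s = n}) := by
    suffices h : LinearMap.ker π ⊔ span k (Set.range u) ≤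
        (span k (b '' {s | d s = n})).comap (π ∘ₗ GradedAlgebra.proj 𝒜 n) from
      h (ker_sup_span ▸ mem_top)
    refine sup_le (fun a ha => ?_) (span_le.2 ?_)
    · rw [mem_comap, LinearMap.comp_apply, LinearMap.mem_ker.1 (hπ.proj_mem ha n)]
      exact zero_mem _
    · rintro _ ⟨s, rfl⟩
      rw [SetLike.mem_coe, mem_comap, LinearMap.comp_apply, GradedAlgebra.proj_apply,
        DirectSum.decompose_of_mem 𝒜 (hu s), DirectSum.coe_of_apply]
      split_ifs with hs
      · exact subset_span ⟨s, hs, (hub s).symm⟩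
      · simp
  refine le_antisymm ?_ (span_le.2 ?_)
  · rintro _ ⟨a, ha, rfl⟩
    simpa [GradedAlgebra.proj_apply, DirectSum.decompose_of_mem_same 𝒜 ha] using π_proj_mem a
  · rintro _ ⟨s, rfl, rfl⟩
    exact ⟨u s, hu s, hub s⟩

lemma exists_isHomogeneousBasis_map (hπ : IsHomogSpan 𝒜 (LinearMap.ker π))
    (hsurj : Function.Surjective π) {m : ℕ} {a : A} (ha : a ∈ 𝒜 m) (hπa : π a ≠ 0) :
    ∃ (S : Type u) (b : Module.Basis (Option S) k M) (d : Option S → ℕ),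
      b none = π a ∧ d none = m ∧ IsHomogeneousBasis (fun n => (𝒜 n).map π) b d := by
  classical
  let homogeneous : Set M := {x | ∃ n, x ∈ (𝒜 n).map π}
  have top_le : ⊤ ≤ span k homogeneous := by
    rw [← LinearMap.range_eq_top.2 hsurj, ← Submodule.map_top, ← span_homogeneous_eq_top 𝒜,
      map_span]
    refine span_mono ?_
    rintro _ ⟨c, ⟨n, hc⟩, rfl⟩
    exact ⟨n, mem_map_of_mem hc⟩
  have indep : LinearIndepOn k id {π a} := (linearIndepOn_singleton_iff k).2 hπa
  have sub : {π a} ⊆ homogeneous := by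
    rintro _ rfl
    exact ⟨m, mem_map_of_mem ha⟩
  let b := Module.Basis.extendLe indep sub top_le
  let πa : indep.extend sub := ⟨π a, indep.subset_extend sub rfl⟩
  have exists_degree (x : indep.extend sub) :
      ∃ n, (x : M) ∈ (𝒜 n).map π ∧ (x = πa → n = m) := by
    by_cases hx : x = πa
    · exact ⟨m, hx ▸ mem_map_of_mem ha, fun _ => rfl⟩
    · obtain ⟨n, hn⟩ := indep.extend_subset sub x.2
      exact ⟨n, hn, fun h => absurd h hx⟩
  choose d hd hd' using exists_degree
  let e := Equiv.optionSubtypeNe πa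
  refine ⟨_, b.reindex e.symm, d ∘ e, ?_, hd' _ (by simp [e]),
    isHomogeneousBasis_map hπ _ fun s => ?_⟩
  · simp [b, e, πa]
  · simpa [b] using hd (e s)

end QuotientBasis

/-! ### Alternating words -/

/-- Words in the letters `Σ i, S i` in which no two adjacent letters have the same index. When
`Option (S i)` indexes a basis of an algebra whose member `none` is `1`, these are the words
indexing a basis of the free product. -/
def AltWord {ι : Type*} (S : ι → Type*) : Type _ :=
  {l : List (Σ i, S i) // l.IsChain fun p q => p.1 ≠ q.1}

namespace AltWord

variable {ι : Type*} {S : ι → Type*}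

/-- The empty word. -/
def nil : AltWord S := ⟨[], .nil⟩

/-- The index of the first letter, if there is one. -/
def headIdx (z : AltWord S) : Option ι := z.1.head?.map Sigma.fst

lemma headIdx_eq_none_iff {z : AltWord S} : z.headIdx = none ↔ z = nil :=
  ⟨fun h => Subtype.ext (by simpa [headIdx, nil] using h), fun h => h ▸ rfl⟩

lemma fst_ne_of_headIdx_ne {i : ι} {z : AltWord S} (h : z.headIdx ≠ some i) :
    ∀ p ∈ z.1.head?, i ≠ p.1 := by
  rintro p hp rfl
  simp_all [headIdx]

/-- Prepends a letter of index `i`, or nothing, to a word not starting with index `i`. -/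
def cons (i : ι) : Option (S i) × {z : AltWord S // z.headIdx ≠ some i} → AltWord S
  | (none, z) => z
  | (some s, z) => ⟨⟨i, s⟩ :: z.1.1, List.isChain_cons.2 ⟨fst_ne_of_headIdx_ne z.2, z.1.2⟩⟩

lemma cons_none (i : ι) (z : {z : AltWord S // z.headIdx ≠ some i}) : cons i (none, z) = z := rfl

lemma cons_injective (i : ι) : Function.Injective (cons (S := S) i) := by
  rintro ⟨_ | s, z⟩ ⟨_ | s', z'⟩ h
  · exact congrArg _ (Subtype.ext h)
  · exact absurd (congrArg headIdx h) z.2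
  · exact absurd (congrArg headIdx h.symm) z'.2
  · obtain ⟨hs, hz⟩ := List.cons.inj (congrArg Subtype.val h)
    obtain rfl : s = s' := by simpa using hs
    exact congrArg _ (Subtype.ext (Subtype.ext hz))

lemma cons_surjective (i : ι) : Function.Surjective (cons (S := S) i) := by
  intro z
  by_cases hz : z.headIdx = some i
  · obtain ⟨_ | ⟨⟨j, s⟩, l⟩, hl⟩ := z
    · simp [headIdx] at hz
    · obtain rfl : j = i := by simpa [headIdx] using hz
      obtain ⟨head_ne, hl'⟩ := List.isChain_cons.1 hl
      have hl_head : headIdx ⟨l, hl'⟩ ≠ some j := fun h => by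
        obtain ⟨p, hp, hpj⟩ := Option.map_eq_some_iff.1 h
        exact head_ne p hp hpj.symm
      exact ⟨(some s, ⟨⟨l, hl'⟩, hl_head⟩), rfl⟩
  · exact ⟨(none, ⟨z, hz⟩), rfl⟩

/-- Alternating words are uniquely an optional letter of index `i` followed by a word not starting
with index `i`. -/
noncomputable def consEquiv (i : ι) :
    Option (S i) × {z : AltWord S // z.headIdx ≠ some i} ≃ AltWord S :=
  Equiv.ofBijective (cons i) ⟨cons_injective i, cons_surjective i⟩

@[elab_as_elim]
lemma induction {P : AltWord S → Prop} (nil : P nil)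
    (cons : ∀ (i : ι) (s : S i) (z : {z : AltWord S // z.headIdx ≠ some i}),
      P z → P (cons i (some s, z))) (z : AltWord S) : P z := by
  obtain ⟨l, hl⟩ := z
  induction l with
  | nil => exact nil
  | cons p l ih =>
    obtain ⟨⟨_ | s, z⟩, h⟩ := cons_surjective p.1 ⟨p :: l, hl⟩
    · exact absurd (congrArg headIdx h) z.2
    · obtain rfl : l = z.1.1 := (List.cons.inj (congrArg Subtype.val h)).2.symm
      exact h ▸ cons p.1 s z (ih z.1.2)

/-- The product of the values `v i (some s)` at the letters `s` of a word; its additive version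
`AltWord.sum` gives the degree of a word. -/
@[to_additive]
def prod {N : Type*} [Monoid N] (v : ∀ i, Option (S i) → N) (z : AltWord S) : N :=
  (z.1.map fun p => v p.1 (some p.2)).prod

@[to_additive]
lemma prod_nil {N : Type*} [Monoid N] (v : ∀ i, Option (S i) → N) : prod v nil = 1 := rfl

@[to_additive]
lemma prod_cons {N : Type*} [Monoid N] {v : ∀ i, Option (S i) → N} {i : ι} (hv : v i none = 1)
    (s : Option (S i)) (z : {z : AltWord S // z.headIdx ≠ some i}) :
    prod v (cons i (s, z)) = v i s * prod v z := by
  cases s with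
  | none => rw [cons_none, hv, one_mul]
  | some s => rfl

end AltWord

/-! ### A basis of the free product -/

section FreeProduct

open LinearAlgebra

variable {ι : Type*} [DecidableEq ι] {R : Type*} [CommSemiring R] {A : ι → Type*}
  [∀ i, Semiring (A i)] [∀ i, Algebra R (A i)]

lemma freeProduct_lift_ι {B : Type*} [Semiring B] [Algebra R B] (f : ∀ i, A i →ₐ[R] B) (i : ι)
    (a : A i) : FreeProduct.lift R A (fun {i} => f i) (FreeProduct.ι R A i a) = f i a :=
  DFunLike.congr_fun (FreeProduct.lift_comp_ι R A (maps := fun {i} => f i) (i := i)) a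

lemma eq_top_of_ι_mul_mem {P : Submodule R (FreeProduct R A)} (one_mem : 1 ∈ P)
    (ι_mul_mem : ∀ i (a : A i), ∀ x ∈ P, FreeProduct.ι R A i a * x ∈ P) : P = ⊤ := by
  let stabilizer : Subalgebra R (FreeProduct R A) :=
    { carrier := {c | ∀ x ∈ P, c * x ∈ P}
      mul_mem' := fun ha hb x hx => by rw [mul_assoc]; exact ha _ (hb x hx)
      add_mem' := fun ha hb x hx => by rw [add_mul]; exact add_mem (ha x hx) (hb x hx)
      algebraMap_mem' := fun r x hx => by rw [← Algebra.smul_def]; exact P.smul_mem r hx }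
  let toStabilizer : FreeProduct R A →ₐ[R] stabilizer :=
    FreeProduct.lift R A fun {i} => (FreeProduct.ι R A i).codRestrict _ (ι_mul_mem i)
  have val_toStabilizer : stabilizer.val.comp toStabilizer = AlgHom.id R _ := by
    refine (FreeProduct.lift R A).symm.injective ?_
    ext i a
    exact congrArg Subtype.val (freeProduct_lift_ι _ i a)
  refine eq_top_iff.2 fun c _ => ?_
  have hc : c ∈ stabilizer := by
    rw [← AlgHom.id_apply (R := R) c, ← val_toStabilizer]
    exact (toStabilizer c).2
  simpa using hc 1 one_mem

end FreeProduct

namespace AltWord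

open LinearAlgebra

variable {ι : Type*} {R : Type*} [CommSemiring R] {A : ι → Type*} [∀ i, Semiring (A i)]
  [∀ i, Algebra R (A i)] {S : ι → Type*} (b : ∀ i, Module.Basis (Option (S i)) R (A i))

/-- The decomposition `V ≃ A i ⊗ Q` of the free module `V` on the alternating words, where `Q` is
the free module on those not starting with index `i`, with `A i ⊗ Q` encoded as functions from
words to `A i`. -/
noncomputable def splitEquiv (i : ι) :
    (AltWord S →₀ R) ≃ₗ[R] ({z : AltWord S // z.headIdx ≠ some i} →₀ A i) :=
  Finsupp.domLCongr ((consEquiv i).symm.trans (Equiv.prodComm _ _)) ≪≫ₗ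
    Finsupp.curryLinearEquiv R ≪≫ₗ Finsupp.mapRange.linearEquiv (b i).repr.symm

lemma splitEquiv_single_cons (i : ι) (s : Option (S i))
    (z : {z : AltWord S // z.headIdx ≠ some i}) :
    splitEquiv b i (Finsupp.single (cons i (s, z)) 1) = Finsupp.single z (b i s) := by
  have h : (consEquiv i).symm (cons i (s, z)) = (s, z) := (consEquiv i).symm_apply_apply _
  simp [splitEquiv, h]

/-- The action of `A i` on the free module on the alternating words by left multiplication on the
factor `A i` of `splitEquiv`. -/
noncomputable def action (i : ι) : A i →ₐ[R] Module.End R (AltWord S →₀ R) :=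
  ((splitEquiv b i).symm.conjAlgEquiv R).toAlgHom.comp (Algebra.lsmul R R _)

variable {b}

lemma action_single (hb : ∀ i, b i none = 1) (i : ι) (s : Option (S i))
    (z : {z : AltWord S // z.headIdx ≠ some i}) :
    action b i (b i s) (Finsupp.single z 1) = Finsupp.single (cons i (s, z)) 1 := by
  have h : splitEquiv b i (Finsupp.single z 1) = Finsupp.single z 1 := by
    rw [← cons_none, splitEquiv_single_cons, hb]
  refine (splitEquiv b i).injective ?_
  simp [action, h, splitEquiv_single_cons]

variable [DecidableEq ι]

lemma lift_action_prod_single_nil (hb : ∀ i, b i none = 1) (z : AltWord S) :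
    FreeProduct.lift R A (fun {i} => action b i) (prod (fun i s => FreeProduct.ι R A i (b i s)) z)
      (Finsupp.single nil 1) = Finsupp.single z 1 := by
  induction z using AltWord.induction with
  | nil => simp [prod_nil]
  | cons i s z ih =>
    rw [prod_cons (by rw [hb, map_one]), map_mul, Module.End.mul_apply, ih,
      freeProduct_lift_ι, action_single hb]

lemma linearIndependent_prod (hb : ∀ i, b i none = 1) :
    LinearIndependent R (prod fun i s => FreeProduct.ι R A i (b i s)) := by
  let evalNil := (LinearMap.applyₗ (Finsupp.single (nil : AltWord S) (1 : R))) ∘ₗ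
    (FreeProduct.lift R A (fun {i} => action b i)).toLinearMap
  refine LinearIndependent.of_comp evalNil ?_
  convert (Finsupp.basisSingleOne (R := R) (ι := AltWord S)).linearIndependent using 1
  funext z
  simpa [evalNil] using lift_action_prod_single_nil hb z

lemma span_range_prod (hb : ∀ i, b i none = 1) :
    span R (Set.range (prod (S := S) fun i s => FreeProduct.ι R A i (b i s))) = ⊤ := by
  set P := span R (Set.range (prod (S := S) fun i s => FreeProduct.ι R A i (b i s)))
  have ι_mul_prod_mem (i : ι) (z : {z : AltWord S // z.headIdx ≠ some i}) (a : A i) :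
      FreeProduct.ι R A i a * prod (fun i s => FreeProduct.ι R A i (b i s)) z.1 ∈ P := by
    suffices h : span R (Set.range (b i)) ≤ P.comap
        (LinearMap.mulRight R _ ∘ₗ (FreeProduct.ι R A i).toLinearMap) from
      h ((b i).mem_span a)
    refine span_le.2 ?_
    rintro _ ⟨s, rfl⟩
    refine subset_span ⟨cons i (s, z), ?_⟩
    rw [prod_cons (by rw [hb, map_one])]
    rfl
  refine eq_top_of_ι_mul_mem (subset_span ⟨nil, prod_nil _⟩) fun i a => ?_
  suffices h : P ≤ P.comap (LinearMap.mulLeft R (FreeProduct.ι R A i a)) from @h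
  refine span_le.2 ?_
  rintro _ ⟨z, rfl⟩
  obtain ⟨⟨s, z⟩, rfl⟩ := cons_surjective i z
  rw [SetLike.mem_coe, mem_comap, LinearMap.mulLeft_apply, prod_cons (by rw [hb, map_one]),
    ← mul_assoc, ← map_mul]
  exact ι_mul_prod_mem i z _

/-- The basis of a free product of algebras consisting of the alternating products of members
different from `1` of bases of the factors. -/
noncomputable def basis (hb : ∀ i, b i none = 1) :
    Module.Basis (AltWord S) R (FreeProduct R A) :=
  Module.Basis.mk (linearIndependent_prod hb) (span_range_prod hb).ge

end AltWord

/-! ### Generating functions -/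

/-- The generating function of a set `T` weighted by `d`. Its coefficients are cardinalities, to be
read as `0` when infinite. -/
noncomputable def genFun {T : Type*} (d : T → ℕ) : ℚ⟦X⟧ :=
  PowerSeries.mk fun n => (Nat.card {t // d t = n} : ℚ)

section GeneratingFunctions

variable {T T' : Type*}

lemma genFun_congr {d : T → ℕ} {d' : T' → ℕ} (e : T ≃ T') (h : ∀ t, d' (e t) = d t) :
    genFun d = genFun d' := by
  ext n
  simp only [genFun, coeff_mk]
  rw [Nat.card_congr (e.subtypeEquiv (q := fun t => d' t = n) fun t => by rw [h t])]

lemma genFun_unique [Unique T] {d : T → ℕ} (hd : d default = 0) : genFun d = 1 := by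
  ext n
  rw [genFun, coeff_mk, coeff_one]
  split_ifs with hn
  · have : Unique {t // d t = n} := ⟨⟨⟨default, by rw [hd, hn]⟩⟩, fun _ => Subsingleton.elim _ _⟩
    simp
  · have : IsEmpty {t // d t = n} := ⟨fun t => hn (by rw [← t.2, Unique.eq_default t.1, hd])⟩
    simp

lemma finite_fiber_comp {f : T' → T} (hf : Function.Injective f) (d : T → ℕ)
    [∀ n, Finite {t // d t = n}] (n : ℕ) : Finite {t // d (f t) = n} :=
  Finite.of_injective (fun t => (⟨f t, t.2⟩ : {t // d t = n}))
    fun _ _ h => Subtype.ext (hf (congrArg Subtype.val h))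

lemma genFun_prod (d : T → ℕ) (d' : T' → ℕ) [∀ n, Finite {t // d t = n}]
    [∀ n, Finite {t // d' t = n}] :
    genFun (fun p : T × T' => d p.1 + d' p.2) = genFun d * genFun d' := by
  ext n
  let e : {p : T × T' // d p.1 + d' p.2 = n} ≃
      Σ m : Finset.HasAntidiagonal.antidiagonal n, {t // d t = m.1.1} × {t' // d' t' = m.1.2} :=
    { toFun p := ⟨⟨(d p.1.1, d' p.1.2), by simpa using p.2⟩, ⟨p.1.1, rfl⟩, ⟨p.1.2, rfl⟩⟩
      invFun q := ⟨(q.2.1, q.2.2), by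
        rw [q.2.1.2, q.2.2.2]; exact Finset.HasAntidiagonal.mem_antidiagonal.1 q.1.2⟩
      left_inv _ := rfl
      right_inv := by
        rintro ⟨⟨⟨m, m'⟩, h⟩, ⟨t, ht : d t = m⟩, ⟨t', ht' : d' t' = m'⟩⟩
        subst ht ht'
        rfl }
  rw [coeff_mul, genFun, coeff_mk, Nat.card_congr e, Nat.card_sigma, Nat.cast_sum]
  simp only [genFun, coeff_mk, Nat.card_prod, Nat.cast_mul]
  exact Finset.sum_coe_sort _ fun m : ℕ × ℕ =>
    (Nat.card {t // d t = m.1} : ℚ) * Nat.card {t // d' t = m.2}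

lemma genFun_eq_sum_fiber {J : Type*} [Fintype J] (d : T → ℕ) [∀ n, Finite {t // d t = n}]
    (f : T → J) : genFun d = ∑ j, genFun fun t : {t // f t = j} => d t := by
  ext n
  have (j : J) := finite_fiber_comp (Subtype.val_injective (p := fun t => f t = j)) d n
  simp only [genFun, map_sum, coeff_mk]
  rw [← Nat.cast_sum, ← Nat.card_sigma]
  congr 1
  refine Nat.card_congr
    { toFun t := ⟨f t, ⟨t, rfl⟩, t.2⟩
      invFun t := ⟨t.2.1, t.2.2⟩
      left_inv _ := rfl
      right_inv := by rintro ⟨_, ⟨t, rfl⟩, _⟩; rfl }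

lemma genFun_eq_add_compl (d : T → ℕ) [∀ n, Finite {t // d t = n}] (p : T → Prop) :
    genFun d = (genFun fun t : {t // p t} => d t) + genFun fun t : {t // ¬ p t} => d t := by
  classical
  rw [genFun_eq_sum_fiber d fun t => decide (p t), Fintype.sum_bool]
  congr 1
  · exact genFun_congr (Equiv.subtypeEquivRight (by simp)) fun _ => rfl
  · exact genFun_congr (Equiv.subtypeEquivRight (by simp)) fun _ => rfl

lemma constantCoeff_genFun_ne_zero (d : T → ℕ) [∀ n, Finite {t // d t = n}] {t : T}
    (ht : d t = 0) : constantCoeff (genFun d) ≠ 0 := by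
  have : Nonempty {t // d t = 0} := ⟨⟨t, ht⟩⟩
  rw [← coeff_zero_eq_constantCoeff_apply, genFun, coeff_mk]
  exact Nat.cast_ne_zero.2 Nat.card_pos.ne'

end GeneratingFunctions

lemma mk_quotDim_ker_eq_genFun {k : Type} [Field k] {A : Type} [Ring A] [Algebra k A]
    {𝒜 : ℕ → Submodule k A} {M S : Type*} [AddCommGroup M] [Module k M] {π : A →ₗ[k] M}
    {b : Module.Basis S k M} {d : S → ℕ} (h : IsHomogeneousBasis (fun n => (𝒜 n).map π) b d) :
    (PowerSeries.mk fun n => (quotDim k 𝒜 (LinearMap.ker π) n : ℚ)) = genFun d := by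
  ext n
  rw [coeff_mk, quotDim_ker, h.finrank_eq, genFun, coeff_mk]

lemma inv_eq_one_add_sum_inv_sub_one {K : Type*} [Field K] {ι : Type*} [Fintype ι] {C : K⟦X⟧}
    {A Q : ι → K⟦X⟧} (hC : constantCoeff C ≠ 0) (hA : ∀ i, constantCoeff (A i) ≠ 0)
    (hAQ : ∀ i, A i * Q i = C) (hCQ : C = 1 + ∑ i, (C - Q i)) :
    C⁻¹ = 1 + ∑ i, ((A i)⁻¹ - 1) := by
  have inv_A (i : ι) : (A i)⁻¹ = C⁻¹ * Q i := by
    calc (A i)⁻¹ = C⁻¹ * C * (A i)⁻¹ := by rw [PowerSeries.inv_mul_cancel C hC, one_mul]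
      _ = C⁻¹ * Q i * (A i * (A i)⁻¹) := by nth_rw 2 [← hAQ i]; ring
      _ = C⁻¹ * Q i := by rw [PowerSeries.mul_inv_cancel _ (hA i), mul_one]
  have expand : C⁻¹ * C = C⁻¹ * (1 + ∑ i, (C - Q i)) := congrArg (C⁻¹ * ·) hCQ
  simp only [mul_add, Finset.mul_sum, mul_sub, PowerSeries.inv_mul_cancel C hC, mul_one] at expand
  simp only [inv_A, Finset.sum_sub_distrib] at expand ⊢
  linear_combination -expand

namespace AltWord

variable {ι : Type*} [Fintype ι] {S : ι → Type*} {d : ∀ i, Option (S i) → ℕ}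

theorem inv_genFun_sum (hd : ∀ i, d i none = 0) [∀ n, Finite {z : AltWord S // sum d z = n}] :
    (genFun (sum d))⁻¹ = 1 + ∑ i, ((genFun (d i))⁻¹ - 1) := by
  have finite_letters (i : ι) (n : ℕ) : Finite {s // d i s = n} := by
    have nil_ne : (nil : AltWord S).headIdx ≠ some i := by simp [headIdx_eq_none_iff.2 rfl]
    have key := finite_fiber_comp (f := fun s => cons i (s, ⟨nil, nil_ne⟩))
      (fun s s' h => congrArg Prod.fst (cons_injective i h)) (sum d) n
    simpa only [sum_cons (hd i), sum_nil, add_zero] using key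
  have finite_not_starting (i : ι) := finite_fiber_comp
    (Subtype.val_injective (p := fun z : AltWord S => z.headIdx ≠ some i)) (sum d)
  refine inv_eq_one_add_sum_inv_sub_one
    (Q := fun i => genFun fun z : {z : AltWord S // z.headIdx ≠ some i} => sum d z)
    (constantCoeff_genFun_ne_zero _ (sum_nil d))
    (fun i => constantCoeff_genFun_ne_zero _ (hd i)) (fun i => ?_) ?_
  · rw [← genFun_prod]
    exact genFun_congr (consEquiv i) fun p => sum_cons (hd i) p.1 p.2
  · have starting (i : ι) : (genFun fun z : {z : AltWord S // z.headIdx = some i} => sum d z) =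
        genFun (sum d) - genFun fun z : {z : AltWord S // z.headIdx ≠ some i} => sum d z :=
      eq_sub_of_add_eq (genFun_eq_add_compl (sum d) fun z => z.headIdx = some i).symm
    have empty : (genFun fun z : {z : AltWord S // z.headIdx = none} => sum d z) = 1 := by
      let _ : Unique {z : AltWord S // z.headIdx = none} :=
        ⟨⟨⟨nil, rfl⟩⟩, fun z => Subtype.ext (headIdx_eq_none_iff.1 z.2)⟩
      exact genFun_unique (sum_nil d)
    conv_lhs => rw [genFun_eq_sum_fiber (sum d) headIdx, Fintype.sum_option, empty]
    simp only [starting]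

end AltWord

/-! ### The presentation of the free product -/

section Presentation

open LinearAlgebra

variable {k : Type} [Field k] {ι : Type} [DecidableEq ι] {X : ι → Type} {Z : Type}
  (e : (Σ i, X i) ≃ Z) {I : ∀ i, Submodule k (FreeAlgebra k (X i))}
  (hI : ∀ i, IsTwoSidedSub (I i))

/-- The presentation of the free product of the algebras `k⟨X i⟩ / I i` by the generators
`Z ≃ Σ i, X i`. -/
noncomputable def presentation :
    FreeAlgebra k Z →ₐ[k] FreeProduct k fun i => (hI i).Quotient :=
  FreeAlgebra.lift k ((fun p : Σ i, X i => FreeProduct.ι k (fun i => (hI i).Quotient) p.1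
    ((hI p.1).mk (FreeAlgebra.ι k p.2))) ∘ e.symm)

lemma presentation_ι (i : ι) (x : X i) :
    presentation e hI (FreeAlgebra.ι k (e ⟨i, x⟩)) =
      FreeProduct.ι k (fun i => (hI i).Quotient) i ((hI i).mk (FreeAlgebra.ι k x)) :=
  (FreeAlgebra.lift_ι_apply _ _).trans (congrArg (fun p : Σ i, X i =>
    FreeProduct.ι k (fun i => (hI i).Quotient) p.1 ((hI p.1).mk (FreeAlgebra.ι k p.2)))
    (e.symm_apply_apply ⟨i, x⟩))

lemma presentation_lift_ι (i : ι) (a : FreeAlgebra k (X i)) :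
    presentation e hI (FreeAlgebra.lift k (fun x => FreeAlgebra.ι k (e ⟨i, x⟩)) a) =
      FreeProduct.ι k (fun i => (hI i).Quotient) i ((hI i).mk a) := by
  suffices h : (presentation e hI).comp (FreeAlgebra.lift k fun x => FreeAlgebra.ι k (e ⟨i, x⟩)) =
      (FreeProduct.ι k (fun i => (hI i).Quotient) i).comp (hI i).mk from DFunLike.congr_fun h a
  ext x
  simp [presentation_ι]

lemma ker_presentation :
    LinearMap.ker (presentation e hI).toLinearMap = idealGen k
      (⋃ i, FreeAlgebra.lift k (fun x => FreeAlgebra.ι k (e ⟨i, x⟩)) '' (I i : Set _)) := by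
  set J := idealGen k
    (⋃ i, FreeAlgebra.lift k (fun x => FreeAlgebra.ι k (e ⟨i, x⟩)) '' (I i : Set _))
  have hJ : IsTwoSidedSub J := isTwoSidedSub_idealGen _
  apply le_antisymm
  · let factor (i : ι) : (hI i).Quotient →ₐ[k] hJ.Quotient :=
      Ideal.Quotient.liftₐ (hI i).toIdeal
        (hJ.mk.comp (FreeAlgebra.lift k fun x => FreeAlgebra.ι k (e ⟨i, x⟩))) fun a ha =>
        hJ.mk_eq_zero_iff.2 (subset_idealGen _ (Set.mem_iUnion.2 ⟨i, a, ha, rfl⟩))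
    let inverse := FreeProduct.lift k (fun i => (hI i).Quotient) fun {i} => factor i
    have inverse_comp : inverse.comp (presentation e hI) = hJ.mk := by
      ext z
      obtain ⟨⟨i, x⟩, rfl⟩ := e.surjective z
      rw [Function.comp_apply, Function.comp_apply, AlgHom.comp_apply, presentation_ι,
        freeProduct_lift_ι]
      exact congrArg hJ.mk (FreeAlgebra.lift_ι_apply _ x)
    intro a ha
    rw [← hJ.mk_eq_zero_iff, ← inverse_comp, AlgHom.comp_apply]
    exact (congrArg inverse ha).trans (map_zero inverse)
  · refine span_le.2 ?_
    rintro _ ⟨a, b, s, hs, rfl⟩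
    obtain ⟨i, y, hy, rfl⟩ := Set.mem_iUnion.1 hs
    have mk_y : (hI i).mk y = 0 := (hI i).mk_eq_zero_iff.2 hy
    simp [presentation_lift_ι, mk_y]

lemma isHomogeneousBasis_presentation {w : Z → ℕ} {S : ι → Type*}
    (hIhom : ∀ i, IsHomogSpan (wdeg k fun x => w (e ⟨i, x⟩)) (I i))
    {b : ∀ i, Module.Basis (Option (S i)) k (hI i).Quotient} {d : ∀ i, Option (S i) → ℕ}
    (hb : ∀ i, b i none = 1) (hd : ∀ i, d i none = 0)
    (hbd : ∀ i, IsHomogeneousBasis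
      (fun n => (wdeg k (fun x => w (e ⟨i, x⟩)) n).map (hI i).mk.toLinearMap) (b i) (d i)) :
    IsHomogeneousBasis (fun n => (wdeg k w n).map (presentation e hI).toLinearMap)
      (AltWord.basis hb) (AltWord.sum d) := by
  refine isHomogeneousBasis_map ?_ _ fun z => ?_
  · rw [ker_presentation]
    exact isHomogSpan_idealGen_iUnion_image hIhom _ fun i n a ha => wdeg.lift_ι_comp_mem ha
  · rw [AltWord.basis, Module.Basis.mk_apply]
    induction z using AltWord.induction with
    | nil => exact ⟨1, SetLike.one_mem_graded (wdeg k w), map_one (presentation e hI)⟩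
    | cons i s z ih =>
      obtain ⟨a, ha, hab⟩ := (hbd i).mem (some s)
      obtain ⟨c, hc, hcz⟩ := ih
      rw [AltWord.prod_cons (by rw [hb, map_one]), AltWord.sum_cons (hd i), ← hab, ← hcz]
      refine ⟨_, SetLike.mul_mem_graded (wdeg.lift_ι_comp_mem ha) hc, ?_⟩
      exact (map_mul (presentation e hI) _ _).trans
        (congrArg (· * _) (presentation_lift_ι e hI i a))

end Presentation

theorem stmt18_general {k ι Z : Type} [Field k] [Fintype ι] {X : ι → Type} (e : (Σ i, X i) ≃ Z)
    (w : Z → ℕ) (hw : ∀ z, 1 ≤ w z) (hf : ∀ n, {z | w z = n}.Finite)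
    (I : ∀ i, Submodule k (FreeAlgebra k (X i))) (hI : ∀ i, IsTwoSidedSub (I i))
    (hIhom : ∀ i, IsHomogSpan (wdeg k fun x => w (e ⟨i, x⟩)) (I i)) (hIne : ∀ i, I i ≠ ⊤) :
    (PowerSeries.mk fun n => (quotDim k (wdeg k w) (idealGen k
      (⋃ i, FreeAlgebra.lift k (fun x => FreeAlgebra.ι k (e ⟨i, x⟩)) '' (I i : Set _))) n : ℚ))⁻¹ =
      1 + ∑ i, ((PowerSeries.mk fun n =>
        (quotDim k (wdeg k fun x => w (e ⟨i, x⟩)) (I i) n : ℚ))⁻¹ - 1) := by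
  classical
  choose S b d hb hd hbd using fun i => exists_isHomogeneousBasis_map
    (π := (hI i).mk.toLinearMap) (by rw [(hI i).ker_mk]; exact hIhom i)
    (Ideal.Quotient.mkₐ_surjective k _) (SetLike.one_mem_graded (wdeg k fun x => w (e ⟨i, x⟩)))
    fun h => (hI i).one_notMem (hIne i) ((hI i).mk_eq_zero_iff.1 h)
  have hb_one (i : ι) : b i none = 1 := (hb i).trans (map_one (hI i).mk)
  have hC := isHomogeneousBasis_presentation e hI hIhom hb_one hd hbd
  have (n : ℕ) := wdeg.module_finite (k := k) hw hf n
  have (n : ℕ) : Finite {z // AltWord.sum d z = n} := hC.finite n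
  have factor_series (i : ι) := mk_quotDim_ker_eq_genFun (hbd i)
  have product_series := mk_quotDim_ker_eq_genFun hC
  simp only [(hI _).ker_mk] at factor_series
  rw [ker_presentation] at product_series
  simpa only [factor_series, product_series] using AltWord.inv_genFun_sum hd

/-- **Hilbert series of a free product** (used in Section 5): for connected graded
algebras `A = k⟨X⟩/I_A`, `B = k⟨Y⟩/I_B` and their free product
`C = A*B = k⟨X ⊔ Y⟩/J`, one has `C(t)⁻¹ = A(t)⁻¹ + B(t)⁻¹ - 1`. -/
theorem stmt18 {k X Y : Type} [Field k]
    (wX : X → ℕ) (wY : Y → ℕ)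
    (hwX : ∀ x, 1 ≤ wX x) (hwY : ∀ y, 1 ≤ wY y)
    (hfX : ∀ n, {x | wX x = n}.Finite) (hfY : ∀ n, {y | wY y = n}.Finite)
    (IA : Submodule k (FreeAlgebra k X))
    (hIA2 : IsTwoSidedSub IA) (hIAhom : IsHomogSpan (wdeg k wX) IA) (hIAne : IA ≠ ⊤)
    (IB : Submodule k (FreeAlgebra k Y))
    (hIB2 : IsTwoSidedSub IB) (hIBhom : IsHomogSpan (wdeg k wY) IB) (hIBne : IB ≠ ⊤)
    (J : Submodule k (FreeAlgebra k (X ⊕ Y)))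
    (hJ : J = idealGen k
      ((FreeAlgebra.lift k fun x : X => FreeAlgebra.ι k (Sum.inl x : X ⊕ Y)) '' IA ∪
       (FreeAlgebra.lift k fun y : Y => FreeAlgebra.ι k (Sum.inr y : X ⊕ Y)) '' IB)) :
    (PowerSeries.mk fun n => (quotDim k (wdeg k (Sum.elim wX wY)) J n : ℚ))⁻¹ =
      (PowerSeries.mk fun n => (quotDim k (wdeg k wX) IA n : ℚ))⁻¹ +
      (PowerSeries.mk fun n => (quotDim k (wdeg k wY) IB n : ℚ))⁻¹ - 1 := by
  have h := stmt18_general (Equiv.sumEquivSigmaBool X Y).symm (Sum.elim wX wY)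
    (Sum.rec hwX hwY) (fun n => Set.finite_preimage_inl_and_inr.1 ⟨hfX n, hfY n⟩)
    (Bool.rec IA IB) (Bool.rec hIA2 hIB2) (Bool.rec hIAhom hIBhom) (Bool.rec hIAne hIBne)
  rw [Fintype.sum_bool, ← Set.iSup_eq_iUnion, iSup_bool_eq, sup_comm] at h
  subst hJ
  have rearrange (a b : ℚ⟦X⟧) : 1 + (b - 1 + (a - 1)) = a + b - 1 := by ring
  exact h.trans (rearrange _ _)
end
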